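/- Given any d ≥ 2, C_0 ≥ 1 and parameters 0 < τ_1 ≤ τ_2 < 1, there exist constants ε_0 ∈ (0,1) and J_0 ∈ ℕ depending only on these quantities with the following property. For s ∈ (d − ε_0, d), let E ⊆ [0,1]^d be any quasi-regular Borel set equipped with a locally uniformly s-dimensional probability measure μ satisfying C_0^{−1} T^{d−s} ≤ F_μ(T) ≤ C_0 T^{d−s} for all T ≥ 1. Then for every (τ_1, τ_2)-lacunary sequence t_1, …, t_{J_0} ∈ (0,1], at least one of the t_j lies in the distance set Δ(E). -/

import Mathlib

open MeasureTheory Set Metric Filter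
open scoped ENNReal NNReal Topology

noncomputable section

abbrev Euc (d : ℕ) : Type := EuclideanSpace ℝ (Fin d)

/-- The closed unit cube `[0,1]^d`. -/
def unitCube (d : ℕ) : Set (Euc d) := {x | ∀ i, x i ∈ Icc (0:ℝ) 1}

/-- The distance set `Δ(E,F) = {|x-y| : x ∈ E, y ∈ F}`. -/
def distSet {d : ℕ} (E F : Set (Euc d)) : Set ℝ :=
  {t | ∃ x ∈ E, ∃ y ∈ F, dist x y = t}

/-- `Q` is a dyadic cube of side length `l`, i.e. `Q = 2^{-k}(m + [0,1]^d)`. -/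
def IsDyadicCube {d : ℕ} (Q : Set (Euc d)) (l : ℝ) : Prop :=
  ∃ (k : ℤ) (m : Fin d → ℤ), l = (2:ℝ) ^ (-k) ∧
    Q = {x | ∀ i, (m i : ℝ) * (2:ℝ) ^ (-k) ≤ x i ∧ x i ≤ ((m i : ℝ) + 1) * (2:ℝ) ^ (-k)}

/-- The `s`-dimensional dyadic Hausdorff content: the infimum of `∑ ℓ(Q_i)^s` over
countable covers of `E` by dyadic cubes. -/
def dyadicContent {d : ℕ} (s : ℝ) (E : Set (Euc d)) : ℝ≥0∞ :=
  ⨅ (Q : ℕ → Set (Euc d)) (l : ℕ → ℝ) (_ : ∀ i, IsDyadicCube (Q i) (l i))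
    (_ : E ⊆ ⋃ i, Q i), ∑' i, ENNReal.ofReal (l i ^ s)

/-- The Fourier transform `μ̂(ξ) = ∫ e^{-i x·ξ} dμ(x)` of a finite Borel measure. -/
def fourierM {d : ℕ} (μ : Measure (Euc d)) (ξ : Euc d) : ℂ :=
  ∫ x, Complex.exp (-(Complex.I * ((inner ℝ x ξ : ℝ) : ℂ))) ∂μ

/-- The partial `L²`-Fourier integral `F_μ(T) = ∫_{|ξ| ≤ T} |μ̂(ξ)|² dξ`. -/
def FmuInt {d : ℕ} (μ : Measure (Euc d)) (T : ℝ) : ℝ :=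
  ∫ ξ in {ξ : Euc d | ‖ξ‖ ≤ T}, ‖fourierM μ ξ‖ ^ 2

/-- `μ` is locally uniformly `s`-dimensional: `μ(Q) ≤ C ℓ(Q)^s` for all cubes
`Q ⊆ [0,1]^d`. -/
def LocallyUniformlyDim {d : ℕ} (μ : Measure (Euc d)) (s : ℝ) : Prop :=
  ∃ C : ℝ, 0 < C ∧ ∀ (x : Euc d) (l : ℝ), 0 ≤ l →
    {y : Euc d | ∀ i, y i - x i ∈ Icc (0:ℝ) l} ⊆ unitCube d →
    μ {y : Euc d | ∀ i, y i - x i ∈ Icc (0:ℝ) l} ≤ ENNReal.ofReal (C * l ^ s)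

/-- `E` is quasi-regular for the exponent `s`:
`liminf_{r→0+} (2r)^{-s} H^s(E ∩ B(x;r)) ≥ κ` for `H^s`-a.e. `x ∈ E`. -/
def QuasiRegular {d : ℕ} (E : Set (Euc d)) (s : ℝ) : Prop :=
  ∃ κ : ℝ, 0 < κ ∧ ∀ᵐ x ∂(μH[s] : Measure (Euc d)).restrict E,
    ENNReal.ofReal κ ≤ Filter.liminf
      (fun r : ℝ => μH[s] (E ∩ Metric.ball x r) / ENNReal.ofReal ((2 * r) ^ s))
      (nhdsWithin 0 (Ioi 0))

/-- Elementary oscillatory integral bound on a half period. -/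
lemma aux_half (y δ : ℝ) (hy : y ≠ 0) (hδ : 0 < δ) (hδ1 : δ ≤ 1) :
    ‖∫ φ in (0:ℝ)..Real.pi, Complex.exp (((y * Real.cos φ : ℝ) : ℂ) * Complex.I)‖
      ≤ 2 * δ + 20 / (|y| * δ ^ 2) := by
  have hpi := Real.pi_gt_three
  have hpi4 := Real.pi_lt_four
  set f : ℝ → ℂ := fun φ => Complex.exp (((y * Real.cos φ : ℝ) : ℂ) * Complex.I) with hf
  have hfc : Continuous f := by fun_prop
  have hfn : ∀ φ, ‖f φ‖ = 1 := fun φ => Complex.norm_exp_ofReal_mul_I _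
  have hint : ∀ a b : ℝ, IntervalIntegrable f volume a b := fun a b => hfc.intervalIntegrable a b
  have hsplit : ∫ φ in (0:ℝ)..Real.pi, f φ = (∫ φ in (0:ℝ)..δ, f φ) +
      (∫ φ in δ..(Real.pi - δ), f φ) + ∫ φ in (Real.pi - δ)..Real.pi, f φ := by
    rw [intervalIntegral.integral_add_adjacent_intervals (hint _ _) (hint _ _),
      intervalIntegral.integral_add_adjacent_intervals (hint _ _) (hint _ _)]
  have h1 : ‖∫ φ in (0:ℝ)..δ, f φ‖ ≤ δ := by
    have := intervalIntegral.norm_integral_le_of_norm_le_const (a := 0) (b := δ) (f := f) (C := 1)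
      (fun x _ => (hfn x).le)
    simpa [abs_of_pos hδ] using this
  have h3 : ‖∫ φ in (Real.pi - δ)..Real.pi, f φ‖ ≤ δ := by
    have := intervalIntegral.norm_integral_le_of_norm_le_const (a := Real.pi - δ) (b := Real.pi)
      (f := f) (C := 1) (fun x _ => (hfn x).le)
    simpa [abs_of_pos hδ] using this
  have hsin : ∀ φ ∈ Icc δ (Real.pi - δ), δ / 2 ≤ Real.sin φ := by
    intro φ hφ
    have key : ∀ ψ, δ ≤ ψ → ψ ≤ Real.pi / 2 → δ / 2 ≤ Real.sin ψ := by
      intro ψ h1 h2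
      have := Real.mul_le_sin (by linarith) h2
      have h4 : (1/2 : ℝ) ≤ 2 / Real.pi := by
        rw [div_le_div_iff₀ (by norm_num) (by linarith)]; linarith
      nlinarith
    rcases le_total φ (Real.pi / 2) with h | h
    · exact key φ hφ.1 h
    · have := key (Real.pi - φ) (by linarith [hφ.2]) (by linarith)
      rwa [Real.sin_pi_sub] at this
  have hle : δ ≤ Real.pi - δ := by linarith
  have hyc : (y : ℂ) ≠ 0 := by exact_mod_cast hy
  set F : ℝ → ℂ := fun φ => f φ * (Complex.I / (y * (Real.sin φ : ℂ))) with hF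
  set g : ℝ → ℂ := fun φ => f φ * (Complex.I / y * (Real.cos φ : ℂ) / (Real.sin φ : ℂ) ^ 2) with hg
  have hs0 : ∀ φ ∈ Icc δ (Real.pi - δ), (Real.sin φ : ℂ) ≠ 0 := by
    intro φ hφ
    have := hsin φ hφ
    have : Real.sin φ ≠ 0 := by linarith [hsin φ hφ] |> fun h : 0 < Real.sin φ => h.ne'
    exact_mod_cast this
  have hder : ∀ φ ∈ Icc δ (Real.pi - δ), HasDerivAt F (f φ - g φ) φ := by
    intro φ hφ
    have hs := hs0 φ hφ
    have d1 : HasDerivAt (fun x : ℝ => ((y * Real.cos x : ℝ) : ℂ) * Complex.I)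
        (((y * (-Real.sin φ) : ℝ) : ℂ) * Complex.I) φ :=
      (((Real.hasDerivAt_cos φ).const_mul y).ofReal_comp).mul_const _
    have d2 : HasDerivAt f (f φ * (((y * (-Real.sin φ) : ℝ) : ℂ) * Complex.I)) φ := d1.cexp
    have d3 : HasDerivAt (fun x : ℝ => (y : ℂ) * (Real.sin x : ℂ)) ((y : ℂ) * (Real.cos φ : ℂ)) φ :=
      ((Real.hasDerivAt_sin φ).ofReal_comp).const_mul _
    have d4 := d2.mul ((hasDerivAt_const φ Complex.I).div d3 (mul_ne_zero hyc hs))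
    refine d4.congr_deriv ?_
    simp only [hg, hf, Pi.div_apply]
    push_cast
    push_cast at hs
    field_simp
    ring_nf
    simp only [Complex.I_sq]
    ring
  have hgc : ContinuousOn g (Icc δ (Real.pi - δ)) := by
    apply ContinuousOn.mul hfc.continuousOn
    apply ContinuousOn.div
    · fun_prop
    · fun_prop
    · intro x hx; exact pow_ne_zero 2 (hs0 x hx)
  have hgi : IntervalIntegrable g volume δ (Real.pi - δ) := by
    apply ContinuousOn.intervalIntegrable
    rwa [uIcc_of_le hle]
  have hftc : ∫ φ in δ..(Real.pi - δ), (f φ - g φ) = F (Real.pi - δ) - F δ := by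
    apply intervalIntegral.integral_eq_sub_of_hasDerivAt
    · intro x hx; rw [uIcc_of_le hle] at hx; exact hder x hx
    · exact (hint _ _).sub hgi
  rw [intervalIntegral.integral_sub (hint _ _) hgi] at hftc
  have hay : 0 < |y| := abs_pos.mpr hy
  have hFn : ∀ φ ∈ Icc δ (Real.pi - δ), ‖F φ‖ ≤ 2 / (|y| * δ) := by
    intro φ hφ
    have h := hsin φ hφ
    have hp : 0 < Real.sin φ := by linarith
    simp only [hF, norm_mul, hfn, norm_div, Complex.norm_I, one_mul, Complex.norm_real,
      Real.norm_eq_abs, abs_of_pos hp]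
    rw [div_le_div_iff₀ (by positivity) (by positivity)]
    nlinarith
  have hgn : ∀ φ ∈ Icc δ (Real.pi - δ), ‖g φ‖ ≤ 4 / (|y| * δ ^ 2) := by
    intro φ hφ
    have h := hsin φ hφ
    have hp : 0 < Real.sin φ := by linarith
    simp only [hg, norm_mul, hfn, norm_div, Complex.norm_I, one_mul, Complex.norm_real,
      Real.norm_eq_abs, norm_pow, abs_of_pos hp]
    have hc := Real.abs_cos_le_one φ
    calc 1 / |y| * |Real.cos φ| / Real.sin φ ^ 2 ≤ 1 / |y| * 1 / (δ / 2) ^ 2 := by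
          gcongr
      _ = 4 / (|y| * δ ^ 2) := by field_simp; norm_num
  have hgint : ‖∫ φ in δ..(Real.pi - δ), g φ‖ ≤ 4 / (|y| * δ ^ 2) * 4 := by
    have := intervalIntegral.norm_integral_le_of_norm_le_const (a := δ) (b := Real.pi - δ) (f := g)
      (C := 4 / (|y| * δ ^ 2)) (fun x hx => by
        rw [uIoc_of_le hle] at hx; exact hgn x ⟨hx.1.le, hx.2⟩)
    refine this.trans ?_
    have h5 : |Real.pi - δ - δ| ≤ 4 := by rw [abs_le]; constructor <;> linarith
    gcongr
  have h2 : ‖∫ φ in δ..(Real.pi - δ), f φ‖ ≤ 20 / (|y| * δ ^ 2) := by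
    have e : ∫ φ in δ..(Real.pi - δ), f φ = F (Real.pi - δ) - F δ + ∫ φ in δ..(Real.pi - δ), g φ := by
      rw [← hftc]; ring
    rw [e]
    have a1 := hFn (Real.pi - δ) ⟨hle, le_rfl⟩
    have a2 := hFn δ ⟨le_rfl, hle⟩
    have a3 : 2 / (|y| * δ) ≤ 2 / (|y| * δ ^ 2) := by
      gcongr
      nlinarith
    calc _ ≤ ‖F (Real.pi - δ)‖ + ‖F δ‖ + ‖∫ φ in δ..(Real.pi - δ), g φ‖ :=
          (norm_add_le _ _).trans (by gcongr; exact norm_sub_le _ _)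
      _ ≤ 2 / (|y| * δ ^ 2) + 2 / (|y| * δ ^ 2) + 4 / (|y| * δ ^ 2) * 4 := by
          gcongr <;> linarith
      _ = 20 / (|y| * δ ^ 2) := by ring
  rw [hsplit]
  calc _ ≤ ‖∫ φ in (0:ℝ)..δ, f φ‖ + ‖∫ φ in δ..(Real.pi - δ), f φ‖ +
        ‖∫ φ in (Real.pi - δ)..Real.pi, f φ‖ := norm_add₃_le
    _ ≤ _ := by linarith

lemma aux_full (y δ : ℝ) (hy : y ≠ 0) (hδ : 0 < δ) (hδ1 : δ ≤ 1) :
    ‖∫ φ in (0:ℝ)..(2 * Real.pi), Complex.exp (((y * Real.cos φ : ℝ) : ℂ) * Complex.I)‖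
      ≤ 4 * δ + 40 / (|y| * δ ^ 2) := by
  have hfc : Continuous fun φ : ℝ => Complex.exp (((y * Real.cos φ : ℝ) : ℂ) * Complex.I) := by
    fun_prop
  rw [← intervalIntegral.integral_add_adjacent_intervals (b := Real.pi)
    (hfc.intervalIntegrable _ _) (hfc.intervalIntegrable _ _)]
  have e : ∫ φ in Real.pi..(2 * Real.pi), Complex.exp (((y * Real.cos φ : ℝ) : ℂ) * Complex.I)
      = ∫ φ in (0:ℝ)..Real.pi, Complex.exp (((-y * Real.cos φ : ℝ) : ℂ) * Complex.I) := by
    have := intervalIntegral.integral_comp_add_right (a := 0) (b := Real.pi)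
      (fun φ => Complex.exp (((y * Real.cos φ : ℝ) : ℂ) * Complex.I)) Real.pi
    rw [zero_add, ← two_mul] at this
    rw [← this]
    simp [Real.cos_add_pi]
  rw [e]
  have h1 := aux_half y δ hy hδ hδ1
  have h2 := aux_half (-y) δ (neg_ne_zero.mpr hy) hδ hδ1
  rw [abs_neg] at h2
  calc _ ≤ _ := norm_add_le _ _
    _ ≤ (2 * δ + 20 / (|y| * δ ^ 2)) + (2 * δ + 20 / (|y| * δ ^ 2)) := add_le_add h1 h2
    _ = _ := by ring

/-- rotated version -/
lemma aux_rot (r a b ε δ : ℝ) (hr : 0 < r) (hε : 0 < ε) (ha : ε ≤ |a|) (hδ : 0 < δ) (hδ1 : δ ≤ 1) :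
    ‖∫ φ in (0:ℝ)..(2 * Real.pi),
      Complex.exp (((r * (Real.cos φ * a + Real.sin φ * b) : ℝ) : ℂ) * Complex.I)‖
      ≤ 4 * δ + 40 / (r * ε * δ ^ 2) := by
  set z : ℂ := ⟨a, b⟩ with hz
  set α := Complex.arg z
  have h1 : ‖z‖ * Real.cos α = a := Complex.norm_mul_cos_arg z
  have h2 : ‖z‖ * Real.sin α = b := Complex.norm_mul_sin_arg z
  have hzε : ε ≤ ‖z‖ := ha.trans (Complex.abs_re_le_norm z)
  have e : ∀ φ, r * (Real.cos φ * a + Real.sin φ * b) = (r * ‖z‖) * Real.cos (φ - α) := by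
    intro φ
    rw [Real.cos_sub, ← h1, ← h2]; ring
  simp_rw [e]
  rw [intervalIntegral.integral_comp_sub_right
    (fun φ => Complex.exp (((r * ‖z‖ * Real.cos φ : ℝ) : ℂ) * Complex.I)) α]
  have hper : Function.Periodic
      (fun φ : ℝ => Complex.exp (((r * ‖z‖ * Real.cos φ : ℝ) : ℂ) * Complex.I)) (2 * Real.pi) := by
    intro φ; simp [Real.cos_add_two_pi]
  have := hper.intervalIntegral_add_eq (0 - α) 0
  rw [show 0 - α + 2 * Real.pi = 2 * Real.pi - α by ring, zero_add] at this
  rw [this]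
  have hp : 0 < r * ‖z‖ := by have : 0 < ‖z‖ := lt_of_lt_of_le hε hzε
                              positivity
  refine (aux_full _ δ hp.ne' hδ hδ1).trans ?_
  rw [abs_of_pos hp]
  gcongr


/-- The radial projection onto the unit sphere. -/
def nrm {d : ℕ} (x : Euc d) : Euc d := ‖x‖⁻¹ • x

lemma measurable_nrm {d : ℕ} : Measurable (nrm : Euc d → Euc d) := by
  unfold nrm; fun_prop

/-- Unnormalised spherical measure. -/
def sph (d : ℕ) : Measure (Euc d) := (volume.restrict (ball (0 : Euc d) 1)).map nrm

instance sph_finite (d : ℕ) : IsFiniteMeasure (sph d) := by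
  unfold sph
  have : IsFiniteMeasure (volume.restrict (ball (0 : Euc d) 1)) :=
    ⟨by rw [Measure.restrict_apply_univ]; exact measure_ball_lt_top⟩
  infer_instance

lemma charFun_sph {d : ℕ} (v : Euc d) :
    charFun (sph d) v = ∫ x in ball (0 : Euc d) 1, Complex.exp ((inner ℝ (nrm x) v : ℝ) * Complex.I) := by
  rw [charFun_apply, sph, integral_map measurable_nrm.aemeasurable]
  exact Continuous.aestronglyMeasurable (by fun_prop)

lemma charFun_sph_iso {d : ℕ} (L : Euc d ≃ₗᵢ[ℝ] Euc d) (v : Euc d) :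
    charFun (sph d) (L v) = charFun (sph d) v := by
  rw [charFun_sph, charFun_sph]
  have h := L.measurePreserving.setIntegral_preimage_emb L.toHomeomorph.measurableEmbedding
    (fun x => Complex.exp ((inner ℝ (nrm x) (L v) : ℝ) * Complex.I)) (ball 0 1)
  rw [← h]
  have h2 : L ⁻¹' ball 0 1 = ball 0 1 := by
    ext x; simp
  rw [h2]
  congr 1
  ext x
  have : nrm (L x) = L (nrm x) := by simp [nrm]
  rw [this, L.inner_map_map]

lemma charFun_sph_radial {d : ℕ} (v w : Euc d) (h : ‖v‖ = ‖w‖) :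
    charFun (sph d) v = charFun (sph d) w := by
  rw [← charFun_sph_iso ((ℝ ∙ (v - w))ᗮ.reflection) v, Submodule.reflection_sub h]

lemma sph_sphere (d : ℕ) (hd : 2 ≤ d) : sph d {x | ‖x‖ ≠ 1} = 0 := by
  have : Nonempty (Fin d) := ⟨⟨0, by omega⟩⟩
  have hm : MeasurableSet {x : Euc d | ‖x‖ ≠ 1} :=
    (measurableSet_eq_fun measurable_norm measurable_const).compl
  rw [sph, Measure.map_apply measurable_nrm hm]
  refine measure_mono_null (t := {0}) ?_ ?_
  · intro x hx
    by_contra h0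
    apply hx
    have : ‖x‖ ≠ 0 := by simpa using h0
    simp [nrm, norm_smul, this]
  · rw [Measure.restrict_apply (measurableSet_singleton _)]
    exact measure_mono_null inter_subset_left (measure_singleton _)

lemma sph_slab (d : ℕ) (i : Fin d) (ε : ℝ) (hε : 0 < ε) :
    sph d {x | |x i| < ε} ≤ ENNReal.ofReal (2 ^ d * ε) := by
  have hm : MeasurableSet {x : Euc d | |x i| < ε} :=
    measurableSet_lt (by fun_prop) measurable_const
  rw [sph, Measure.map_apply measurable_nrm hm, Measure.restrict_apply (measurable_nrm hm)]
  set B : Set (Fin d → ℝ) := Set.pi univ (fun j => if j = i then Icc (-ε) ε else Icc (-1) 1) with hB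
  have hBm : MeasurableSet B := by
    refine MeasurableSet.univ_pi (fun j => ?_)
    split_ifs <;> exact measurableSet_Icc
  have hsub : (nrm ⁻¹' {x : Euc d | |x i| < ε}) ∩ ball 0 1 ⊆ (@WithLp.ofLp 2 (Fin d → ℝ)) ⁻¹' B := by
    rintro x ⟨hx, hb⟩
    have hn : ‖x‖ < 1 := by simpa using hb
    have hc : ∀ j, |x j| ≤ ‖x‖ := fun j => by simpa using PiLp.norm_apply_le x j
    rw [mem_preimage, hB, mem_univ_pi]
    intro j
    split_ifs with hj
    · subst hj
      rw [mem_Icc, ← abs_le]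
      have hx' : |‖x‖⁻¹ * x j| < ε := by simpa [nrm] using hx
      rcases eq_or_ne x 0 with h0 | h0
      · simp [h0, hε.le]
      · have hp : 0 < ‖x‖ := norm_pos_iff.mpr h0
        rw [abs_mul, abs_of_pos (inv_pos.mpr hp), inv_mul_lt_iff₀ hp] at hx'
        change |x j| ≤ ε
        nlinarith
    · rw [mem_Icc, ← abs_le]
      change |x j| ≤ 1
      linarith [hc j]
  refine (measure_mono hsub).trans ?_
  rw [(PiLp.volume_preserving_ofLp (Fin d)).measure_preimage hBm.nullMeasurableSet, hB,
    volume_pi_pi]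
  have hle : ∀ j ∈ Finset.univ, volume (if j = i then Icc (-ε) ε else Icc (-1:ℝ) 1) ≤
      ENNReal.ofReal (2 * if j = i then ε else 1) := by
    intro j _
    split_ifs
    · rw [Real.volume_Icc]; apply ENNReal.ofReal_le_ofReal; linarith
    · rw [Real.volume_Icc]; apply ENNReal.ofReal_le_ofReal; norm_num
  refine (Finset.prod_le_prod' hle).trans ?_
  rw [← ENNReal.ofReal_prod_of_nonneg (fun j _ => by split_ifs <;> positivity),
    Finset.prod_mul_distrib]
  simp


lemma sph_decay (d : ℕ) (hd : 2 ≤ d) : ∃ A : ℝ, 0 < A ∧ ∀ η : Euc d, 1 ≤ ‖η‖ →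
    ‖charFun (sph d) η‖ ≤ A * ‖η‖ ^ (-(1/4) : ℝ) := by
  set m := (sph d).real univ with hm
  have hm0 : 0 ≤ m := measureReal_nonneg
  refine ⟨2 ^ d + 44 * m + 1, by positivity, fun η hη => ?_⟩
  set r := ‖η‖ with hr
  have hr0 : 0 < r := by linarith
  set δ : ℝ := r ^ (-(1/4) : ℝ) with hδ
  have hδ0 : 0 < δ := by positivity
  have hδ1 : δ ≤ 1 := Real.rpow_le_one_of_one_le_of_nonpos hη (by norm_num)
  let i0 : Fin d := ⟨0, by omega⟩
  let i1 : Fin d := ⟨1, by omega⟩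
  have hi : i0 ≠ i1 := by simp [i0, i1]
  let w : ℝ → Euc d := fun φ => r • (Real.cos φ • EuclideanSpace.single i0 (1:ℝ)
    + Real.sin φ • EuclideanSpace.single i1 (1:ℝ))
  have hwin : ∀ φ (x : Euc d), inner ℝ x (w φ) = r * (Real.cos φ * x i0 + Real.sin φ * x i1) := by
    intro φ x
    simp [w, inner_smul_right, inner_add_right, EuclideanSpace.inner_single_right]
    ring
  have hwn : ∀ φ, ‖w φ‖ = r := by
    intro φ
    have h1 : ‖w φ‖ ^ 2 = r ^ 2 := by
      rw [← real_inner_self_eq_norm_sq, hwin]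
      have a0 : (w φ) i0 = r * Real.cos φ := by simp [w, hi]
      have a1 : (w φ) i1 = r * Real.sin φ := by simp [w, hi.symm]
      rw [a0, a1]
      have := Real.cos_sq_add_sin_sq φ
      linear_combination r ^ 2 * this
    exact (pow_left_inj₀ (norm_nonneg _) hr0.le two_ne_zero).mp h1
  have hpi := Real.pi_pos
  let f : ℝ → Euc d → ℂ := fun φ x =>
    Complex.exp (((r * (Real.cos φ * x i0 + Real.sin φ * x i1) : ℝ) : ℂ) * Complex.I)
  have hf : Continuous (Function.uncurry f) := by
    simp only [f, Function.uncurry_def]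
    fun_prop
  have hfn : ∀ φ x, ‖f φ x‖ = 1 := fun φ x => Complex.norm_exp_ofReal_mul_I _
  have hcf : ∀ φ, charFun (sph d) η = ∫ x, f φ x ∂(sph d) := by
    intro φ
    rw [charFun_sph_radial η (w φ) (hwn φ).symm, charFun_apply]
    simp only [hwin, f]
  have hswap : ∫ φ in (0:ℝ)..(2 * Real.pi), ∫ x, f φ x ∂(sph d) =
      ∫ x, (∫ φ in (0:ℝ)..(2 * Real.pi), f φ x) ∂(sph d) := by
    simp only [intervalIntegral.integral_of_le (show (0:ℝ) ≤ 2 * Real.pi by positivity)]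
    apply integral_integral_swap
    refine Integrable.of_bound hf.aestronglyMeasurable 1 (ae_of_all _ (fun p => (hfn _ _).le))
  have hconst : ∫ φ in (0:ℝ)..(2 * Real.pi), ∫ x, f φ x ∂(sph d) =
      (2 * Real.pi : ℂ) * charFun (sph d) η := by
    simp_rw [← hcf]
    simp
  have hS : MeasurableSet {x : Euc d | |x i0| < δ} := measurableSet_lt (by fun_prop) measurable_const
  have hpt : ∀ x : Euc d, ‖∫ φ in (0:ℝ)..(2 * Real.pi), f φ x‖ ≤
      {x : Euc d | |x i0| < δ}.indicator (fun _ => 2 * Real.pi) x + 44 * δ := by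
    intro x
    by_cases hx : |x i0| < δ
    · rw [indicator_of_mem (by exact hx)]
      have := intervalIntegral.norm_integral_le_of_norm_le_const (a := 0) (b := 2 * Real.pi)
        (f := fun φ => f φ x) (C := 1) (fun y _ => (hfn y x).le)
      rw [sub_zero, abs_of_pos (by positivity), one_mul] at this
      linarith
    · rw [indicator_of_notMem (by exact hx), zero_add]
      refine (aux_rot r (x i0) (x i1) δ δ hr0 hδ0 (not_lt.mp hx) hδ0 hδ1).trans ?_
      have h4 : δ ^ 4 = r⁻¹ := by
        rw [hδ, ← Real.rpow_natCast, ← Real.rpow_mul hr0.le]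
        norm_num [Real.rpow_neg_one]
      have : 40 / (r * δ * δ ^ 2) = 40 * δ := by
        rw [div_eq_iff (by positivity)]
        have : r * δ ^ 4 = 1 := by rw [h4]; field_simp
        linear_combination (-40) * this
      rw [this]; linarith
  have hslab : (sph d).real {x : Euc d | |x i0| < δ} ≤ 2 ^ d * δ :=
    ENNReal.toReal_le_of_le_ofReal (by positivity) (sph_slab d i0 δ hδ0)
  have hI : Integrable (fun x : Euc d =>
      {x : Euc d | |x i0| < δ}.indicator (fun _ => 2 * Real.pi) x + 44 * δ) (sph d) :=
    ((integrable_const _).indicator hS).add (integrable_const _)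
  have hnorm := norm_integral_le_of_norm_le hI (ae_of_all _ hpt)
  rw [← hswap, hconst, integral_add ((integrable_const _).indicator hS) (integrable_const _),
    integral_indicator_const _ hS, integral_const, norm_mul] at hnorm
  have h2pi : ‖(2 * Real.pi : ℂ)‖ = 2 * Real.pi := by
    simp [abs_of_pos hpi]
  rw [h2pi, smul_eq_mul, smul_eq_mul, ← hm] at hnorm
  have h3 := Real.pi_gt_three
  have : 2 * Real.pi * ‖charFun (sph d) η‖ ≤ 2 * Real.pi * ((2 ^ d + 44 * m + 1) * δ) := by
    refine hnorm.trans ?_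
    have b1 : 0 ≤ m * δ := by positivity
    nlinarith
  exact le_of_mul_le_mul_left this (by positivity)

/-- A probability measure on the unit sphere with Fourier decay. -/
lemma exists_sphere_measure (d : ℕ) (hd : 2 ≤ d) : ∃ σ : Measure (Euc d),
    IsProbabilityMeasure σ ∧ σ {x | ‖x‖ ≠ 1} = 0 ∧ ∃ A : ℝ, 0 < A ∧ ∀ η : Euc d, 1 ≤ ‖η‖ →
    ‖charFun σ η‖ ≤ A * ‖η‖ ^ (-(1/4) : ℝ) := by
  obtain ⟨A, hA, h⟩ := sph_decay d hd
  have hne : sph d univ ≠ 0 := by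
    rw [sph, Measure.map_apply measurable_nrm MeasurableSet.univ, preimage_univ,
      Measure.restrict_apply_univ]
    exact (measure_ball_pos _ _ one_pos).ne'
  have : NeZero (sph d) := ⟨fun h0 => hne (by simp [h0])⟩
  have hm : 0 < (sph d).real univ := ENNReal.toReal_pos hne (measure_ne_top _ _)
  refine ⟨(sph d univ)⁻¹ • sph d, inferInstance, by simp [sph_sphere d hd],
    ((sph d).real univ)⁻¹ * A, by positivity, fun η hη => ?_⟩
  rw [charFun_apply, integral_smul_measure, ← charFun_apply, norm_smul, mul_assoc]
  simp only [ENNReal.toReal_inv, norm_inv, Real.norm_eq_abs]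
  rw [← measureReal_def, abs_of_pos hm]
  gcongr
  exact h η hη


lemma aux_parseval {d : ℕ} (ν : Measure (Euc d)) [IsFiniteMeasure ν] (h : Euc d → ℂ)
    (hi : Integrable h) :
    ∫ ξ, ((‖charFun ν ξ‖ ^ 2 : ℝ) : ℂ) * h ξ =
      ∫ p, (∫ ξ, h ξ * Complex.exp ((inner ℝ (p.1 - p.2) ξ : ℝ) * Complex.I)) ∂(ν.prod ν) := by
  have h1 : ∀ ξ, ((‖charFun ν ξ‖ ^ 2 : ℝ) : ℂ) * h ξ =
      ∫ p : Euc d × Euc d, h ξ * Complex.exp ((inner ℝ (p.1 - p.2) ξ : ℝ) * Complex.I) ∂(ν.prod ν) := by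
    intro ξ
    rw [integral_const_mul, mul_comm]
    congr 1
    have e : ((‖charFun ν ξ‖ ^ 2 : ℝ) : ℂ) = charFun ν ξ * charFun ν (-ξ) := by
      rw [charFun_neg, Complex.mul_conj, Complex.normSq_eq_norm_sq]
    rw [e, charFun_apply, charFun_apply, ← integral_prod_mul]
    congr 1
    ext p
    rw [← Complex.exp_add]
    congr 1
    rw [inner_sub_left, inner_neg_right]
    push_cast; ring
  simp_rw [h1]
  rw [integral_integral_swap]
  have hc : Continuous (fun q : Euc d × (Euc d × Euc d) =>
      Complex.exp ((inner ℝ (q.2.1 - q.2.2) q.1 : ℝ) * Complex.I)) := by fun_prop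
  have := (hi.comp_fst (ν.prod ν)).mul_bdd (c := 1) hc.aestronglyMeasurable
    (ae_of_all _ (fun q => (Complex.norm_exp_ofReal_mul_I _).le))
  exact this

lemma aux_gauss {d : ℕ} (l : ℝ) (hl : 0 < l) (z : Euc d) :
    ∫ ξ : Euc d, ((Real.exp (-l * ‖ξ‖ ^ 2) : ℝ) : ℂ) * Complex.exp ((inner ℝ z ξ : ℝ) * Complex.I) =
      (((Real.pi / l) ^ ((d : ℝ) / 2) * Real.exp (-‖z‖ ^ 2 / (4 * l)) : ℝ) : ℂ) := by
  have h := GaussianFourier.integral_cexp_neg_mul_sq_norm_add (V := Euc d) (b := (l : ℂ)) (by simpa using hl)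
    Complex.I z
  have e : ∀ ξ : Euc d, ((Real.exp (-l * ‖ξ‖ ^ 2) : ℝ) : ℂ) * Complex.exp ((inner ℝ z ξ : ℝ) * Complex.I)
      = Complex.exp (-(l : ℂ) * ‖ξ‖ ^ 2 + Complex.I * (inner ℝ z ξ : ℝ)) := by
    intro ξ
    rw [Complex.ofReal_exp, ← Complex.exp_add]
    congr 1
    push_cast; ring
  simp_rw [e]
  rw [h]
  rw [Complex.ofReal_mul, Complex.ofReal_cpow (by positivity), Complex.ofReal_exp]
  congr 2
  · push_cast; rfl
  · simp
  · push_cast; simp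

lemma aux_gauss_integrable {d : ℕ} (l : ℝ) (hl : 0 < l) :
    Integrable (fun ξ : Euc d => Real.exp (-l * ‖ξ‖ ^ 2)) := by
  have h := (GaussianFourier.integrable_cexp_neg_mul_sq_norm_add (V := Euc d) (b := (l : ℂ))
    (by simpa using hl) 0 0).norm
  refine h.congr (ae_of_all _ fun ξ => ?_)
  simp only [Complex.norm_exp]
  congr 1
  simp [← Complex.ofReal_pow]

lemma aux_energy {d : ℕ} (ν : Measure (Euc d)) [IsFiniteMeasure ν] (l : ℝ) (hl : 0 < l) :
    ∫ ξ, ‖charFun ν ξ‖ ^ 2 * Real.exp (-l * ‖ξ‖ ^ 2) =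
      ∫ p : Euc d × Euc d, (Real.pi / l) ^ ((d : ℝ) / 2) * Real.exp (-‖p.1 - p.2‖ ^ 2 / (4 * l))
        ∂(ν.prod ν) := by
  have h := aux_parseval ν (fun ξ => ((Real.exp (-l * ‖ξ‖ ^ 2) : ℝ) : ℂ)) (aux_gauss_integrable l hl).ofReal
  simp_rw [aux_gauss l hl, ← Complex.ofReal_mul] at h
  rw [integral_complex_ofReal, integral_complex_ofReal] at h
  exact_mod_cast h

lemma aux_mono {d : ℕ} (μ : Measure (Euc d)) [IsFiniteMeasure μ] (K : Set (Euc d))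
    (l : ℝ) (hl : 0 < l) :
    ∫ ξ, ‖charFun (μ.restrict K) ξ‖ ^ 2 * Real.exp (-l * ‖ξ‖ ^ 2) ≤
      ∫ ξ, ‖charFun μ ξ‖ ^ 2 * Real.exp (-l * ‖ξ‖ ^ 2) := by
  rw [aux_energy _ l hl, aux_energy _ l hl, Measure.prod_restrict]
  apply setIntegral_le_integral
  · refine Integrable.of_bound (Continuous.aestronglyMeasurable (by fun_prop))
      ((Real.pi / l) ^ ((d : ℝ) / 2)) (ae_of_all _ fun p => ?_)
    rw [Real.norm_eq_abs, abs_of_nonneg (by positivity)]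
    refine mul_le_of_le_one_right (by positivity) (Real.exp_le_one_iff.mpr ?_)
    rw [neg_div]
    exact neg_nonpos.mpr (by positivity)
  · exact ae_of_all _ fun p => by positivity

lemma aux_sq_meas {d : ℕ} (ν : Measure (Euc d)) [IsFiniteMeasure ν] :
    Measurable (fun ξ : Euc d => ‖charFun ν ξ‖ ^ 2) := by
  have := measurable_charFun (μ := ν)
  fun_prop

lemma aux_sq_bdd {d : ℕ} (ν : Measure (Euc d)) [IsFiniteMeasure ν] (ξ : Euc d) :
    ‖charFun ν ξ‖ ^ 2 ≤ (ν.real univ) ^ 2 := by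
  gcongr
  exact norm_charFun_le ξ

/-- Missing distance implies vanishing of the spherical form. -/
lemma aux_vanish {d : ℕ} (σ : Measure (Euc d)) [IsProbabilityMeasure σ] (hσ : σ {x | ‖x‖ ≠ 1} = 0)
    (ν : Measure (Euc d)) [IsFiniteMeasure ν] (K : Set (Euc d)) (hK : IsCompact K) (hνK : ν Kᶜ = 0)
    (t : ℝ) (ht : 0 < t) (htK : ∀ x ∈ K, ∀ y ∈ K, dist x y ≠ t)
    (hint : Integrable (fun ξ => ((‖charFun ν ξ‖ ^ 2 : ℝ) : ℂ) * charFun σ (t • ξ))) :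
    ∫ ξ, ((‖charFun ν ξ‖ ^ 2 : ℝ) : ℂ) * charFun σ (t • ξ) = 0 := by
  -- separation
  obtain ⟨η, hη, hsep⟩ : ∃ η > 0, ∀ x ∈ K, ∀ y ∈ K, η ≤ |dist x y - t| := by
    rcases K.eq_empty_or_nonempty with h0 | h0
    · exact ⟨1, one_pos, by simp [h0]⟩
    · obtain ⟨q, hq, hmin⟩ := (hK.prod hK).exists_isMinOn (h0.prod h0)
        (f := fun p : Euc d × Euc d => |dist p.1 p.2 - t|) (by fun_prop)
      refine ⟨|dist q.1 q.2 - t|, abs_pos.mpr (sub_ne_zero.mpr (htK _ hq.1 _ hq.2)), fun x hx y hy => ?_⟩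
      have := isMinOn_iff.mp hmin (x, y) (Set.mk_mem_prod hx hy)
      simpa only using this
  have hcm : Measurable (fun ξ : Euc d => charFun σ (t • ξ)) := by
    have := measurable_charFun (μ := σ)
    fun_prop
  -- bound for Gaussian regularisation
  have hbound : ∀ l : ℝ, 0 < l →
      ‖∫ ξ, ((‖charFun ν ξ‖ ^ 2 : ℝ) : ℂ) * (((Real.exp (-l * ‖ξ‖ ^ 2) : ℝ) : ℂ) * charFun σ (t • ξ))‖
        ≤ ((Real.pi / l) ^ ((d : ℝ) / 2) * Real.exp (-η ^ 2 / (4 * l))) * (ν.prod ν).real univ := by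
    intro l hl
    have hgi : Integrable (fun ξ : Euc d => ((Real.exp (-l * ‖ξ‖ ^ 2) : ℝ) : ℂ)) :=
      (aux_gauss_integrable l hl).ofReal
    rw [aux_parseval]
    swap
    · exact hgi.mul_bdd (c := 1) hcm.aestronglyMeasurable
        (ae_of_all _ fun ξ => norm_charFun_le_one _)
    apply norm_integral_le_of_norm_le_const
    have hae : ∀ᵐ p ∂(ν.prod ν), p.1 ∈ K ∧ p.2 ∈ K := by
      have h1 : ∀ᵐ x ∂ν, x ∈ K := by rwa [ae_iff]
      have a1 := Measure.quasiMeasurePreserving_fst (μ := ν) (ν := ν) |>.ae h1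
      have a2 := Measure.quasiMeasurePreserving_snd (μ := ν) (ν := ν) |>.ae h1
      filter_upwards [a1, a2] with p b1 b2 using ⟨b1, b2⟩
    filter_upwards [hae] with p hp
    have e1 : ∀ ξ : Euc d, ((Real.exp (-l * ‖ξ‖ ^ 2) : ℝ) : ℂ) * charFun σ (t • ξ) *
        Complex.exp ((inner ℝ (p.1 - p.2) ξ : ℝ) * Complex.I) =
        ∫ ω, ((Real.exp (-l * ‖ξ‖ ^ 2) : ℝ) : ℂ) *
          Complex.exp ((inner ℝ (p.1 - p.2 + t • ω) ξ : ℝ) * Complex.I) ∂σ := by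
      intro ξ
      rw [charFun_apply, integral_const_mul, mul_assoc, ← integral_mul_const]
      congr 2
      ext ω
      rw [← Complex.exp_add]
      congr 1
      rw [inner_add_left, inner_smul_left, inner_smul_right]
      simp; ring
    simp_rw [e1]
    rw [integral_integral_swap]
    · simp_rw [aux_gauss l hl]
      have : ∀ᵐ ω ∂σ, ‖(((Real.pi / l) ^ ((d : ℝ) / 2) *
          Real.exp (-‖p.1 - p.2 + t • ω‖ ^ 2 / (4 * l)) : ℝ) : ℂ)‖ ≤
          (Real.pi / l) ^ ((d : ℝ) / 2) * Real.exp (-η ^ 2 / (4 * l)) := by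
        have hω : ∀ᵐ ω ∂σ, ‖ω‖ = 1 := by rw [ae_iff]; exact hσ
        filter_upwards [hω] with ω hω
        rw [Complex.norm_real, Real.norm_eq_abs, abs_of_nonneg (by positivity)]
        have hge : η ≤ ‖p.1 - p.2 + t • ω‖ := by
          have h1 := hsep p.1 hp.1 p.2 hp.2
          have h2 := abs_norm_sub_norm_le (p.1 - p.2) (-(t • ω))
          rw [sub_neg_eq_add, norm_neg, norm_smul, hω, mul_one, Real.norm_eq_abs, abs_of_pos ht,
            ← dist_eq_norm] at h2
          exact h1.trans h2
        gcongr
      have := norm_integral_le_of_norm_le_const this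
      simpa using this
    · have hc : Continuous (fun q : Euc d × Euc d =>
          Complex.exp ((inner ℝ (p.1 - p.2 + t • q.2) q.1 : ℝ) * Complex.I)) := by fun_prop
      have := (hgi.comp_fst σ).mul_bdd (c := 1) hc.aestronglyMeasurable
        (ae_of_all _ (fun q => (Complex.norm_exp_ofReal_mul_I _).le))
      exact this
  -- limit along l = 1/(n+1)
  have hlim1 : Tendsto (fun n : ℕ => ∫ ξ, ((‖charFun ν ξ‖ ^ 2 : ℝ) : ℂ) *
      (((Real.exp (-(1 / ((n:ℝ) + 1)) * ‖ξ‖ ^ 2) : ℝ) : ℂ) * charFun σ (t • ξ))) atTop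
      (𝓝 (∫ ξ, ((‖charFun ν ξ‖ ^ 2 : ℝ) : ℂ) * charFun σ (t • ξ))) := by
    apply tendsto_integral_of_dominated_convergence
      (fun ξ => ‖((‖charFun ν ξ‖ ^ 2 : ℝ) : ℂ) * charFun σ (t • ξ)‖)
    · intro n
      apply Measurable.aestronglyMeasurable
      have := aux_sq_meas ν
      fun_prop
    · exact hint.norm
    · intro n
      refine ae_of_all _ fun ξ => ?_
      rw [norm_mul, norm_mul, norm_mul]
      gcongr
      refine mul_le_of_le_one_left (norm_nonneg _) ?_
      rw [Complex.norm_real, Real.norm_eq_abs, abs_of_nonneg (by positivity)]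
      apply Real.exp_le_one_iff.mpr
      rw [neg_mul]
      exact neg_nonpos.mpr (by positivity)
    · refine ae_of_all _ fun ξ => ?_
      have h0 : Tendsto (fun n : ℕ => Real.exp (-(1 / ((n:ℝ) + 1)) * ‖ξ‖ ^ 2)) atTop (𝓝 1) := by
        have := ((tendsto_one_div_add_atTop_nhds_zero_nat (𝕜 := ℝ)).neg.mul_const (‖ξ‖ ^ 2)).rexp
        simpa using this
      have h1 : Tendsto (fun n : ℕ => ((Real.exp (-(1 / ((n:ℝ) + 1)) * ‖ξ‖ ^ 2) : ℝ) : ℂ)) atTop (𝓝 ((1:ℝ):ℂ)) :=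
        (Complex.continuous_ofReal.tendsto _).comp h0
      have := (h1.mul_const (charFun σ (t • ξ))).const_mul ((‖charFun ν ξ‖ ^ 2 : ℝ) : ℂ)
      simpa using this
  have hlim2 : Tendsto (fun n : ℕ => ∫ ξ, ((‖charFun ν ξ‖ ^ 2 : ℝ) : ℂ) *
      (((Real.exp (-(1 / ((n:ℝ) + 1)) * ‖ξ‖ ^ 2) : ℝ) : ℂ) * charFun σ (t • ξ))) atTop (𝓝 0) := by
    have hz : Tendsto (fun n : ℕ => ((Real.pi / (1 / ((n:ℝ) + 1))) ^ ((d : ℝ) / 2) *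
        Real.exp (-η ^ 2 / (4 * (1 / ((n:ℝ) + 1))))) * (ν.prod ν).real univ) atTop (𝓝 0) := by
      have h1 : Tendsto (fun x : ℝ => x ^ ((d : ℝ) / 2) * Real.exp (-(η ^ 2 / 4) * x)) atTop (𝓝 0) :=
        tendsto_rpow_mul_exp_neg_mul_atTop_nhds_zero _ _ (by positivity)
      have h2 : Tendsto (fun n : ℕ => (n : ℝ) + 1) atTop atTop :=
        tendsto_atTop_add_const_right _ _ tendsto_natCast_atTop_atTop
      have h3 := ((h1.comp h2).const_mul (Real.pi ^ ((d : ℝ) / 2))).mul_const ((ν.prod ν).real univ)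
      rw [mul_zero, zero_mul] at h3
      refine h3.congr fun n => ?_
      have hn : (0:ℝ) < (n:ℝ) + 1 := by positivity
      simp only [Function.comp]
      rw [div_div_eq_mul_div, div_one, Real.mul_rpow Real.pi_pos.le hn.le]
      have : -η ^ 2 / (4 * (1 / ((n:ℝ) + 1))) = -(η ^ 2 / 4) * ((n:ℝ) + 1) := by field_simp
      rw [this]; ring
    exact squeeze_zero_norm (fun n => hbound _ (by positivity)) hz
  exact tendsto_nhds_unique hlim1 hlim2


lemma fourierM_eq {d : ℕ} (ν : Measure (Euc d)) (ξ : Euc d) :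
    ‖fourierM ν ξ‖ = ‖charFun ν ξ‖ := by
  have : fourierM ν ξ = charFun ν (-ξ) := by
    rw [fourierM, charFun_apply]
    congr 1
    ext x
    congr 1
    rw [inner_neg_right]; push_cast; ring
  rw [this, charFun_neg, RCLike.norm_conj]

lemma FmuInt_eq {d : ℕ} (ν : Measure (Euc d)) (T : ℝ) :
    FmuInt ν T = ∫ ξ in {ξ : Euc d | ‖ξ‖ ≤ T}, ‖charFun ν ξ‖ ^ 2 := by
  simp [FmuInt, fourierM_eq]

lemma cball_eq {d : ℕ} (T : ℝ) : {ξ : Euc d | ‖ξ‖ ≤ T} = closedBall 0 T := by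
  ext; simp

lemma cball_meas {d : ℕ} (T : ℝ) : MeasurableSet {ξ : Euc d | ‖ξ‖ ≤ T} := by
  rw [cball_eq]; exact measurableSet_closedBall

lemma cball_fin {d : ℕ} (T : ℝ) : volume {ξ : Euc d | ‖ξ‖ ≤ T} < ⊤ := by
  rw [cball_eq]; exact measure_closedBall_lt_top

lemma sq_intOn {d : ℕ} (ν : Measure (Euc d)) [IsFiniteMeasure ν] (T : ℝ) :
    IntegrableOn (fun ξ => ‖charFun ν ξ‖ ^ 2) {ξ : Euc d | ‖ξ‖ ≤ T} := by
  refine IntegrableOn.of_bound (cball_fin T) (aux_sq_meas ν).aestronglyMeasurable ((ν.real univ) ^ 2)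
    (ae_of_all _ fun ξ => ?_)
  rw [Real.norm_eq_abs, abs_of_nonneg (by positivity)]
  exact aux_sq_bdd ν ξ

lemma FmuInt_lint {d : ℕ} (ν : Measure (Euc d)) [IsFiniteMeasure ν] (T : ℝ) :
    ∫⁻ ξ in {ξ : Euc d | ‖ξ‖ ≤ T}, ENNReal.ofReal (‖charFun ν ξ‖ ^ 2) = ENNReal.ofReal (FmuInt ν T) := by
  rw [FmuInt_eq, ofReal_integral_eq_lintegral_ofReal (sq_intOn ν T) (ae_of_all _ fun ξ => by positivity)]

lemma FmuInt_nonneg {d : ℕ} (ν : Measure (Euc d)) (T : ℝ) : 0 ≤ FmuInt ν T := by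
  rw [FmuInt_eq]; positivity

lemma FmuInt_mono {d : ℕ} (ν : Measure (Euc d)) [IsFiniteMeasure ν] {T T' : ℝ} (h : T ≤ T') :
    FmuInt ν T ≤ FmuInt ν T' := by
  rw [FmuInt_eq, FmuInt_eq]
  refine setIntegral_mono_set (sq_intOn ν T') (ae_of_all _ fun ξ => by positivity) ?_
  exact ae_of_all _ fun ξ (hξ : ‖ξ‖ ≤ T) => hξ.trans h

/-- The ratio used in dyadic sums. -/
def qq : ℝ := (2:ℝ) ^ (-(1/8) : ℝ)
lemma qq_pos : 0 < qq := by unfold qq; positivity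
lemma qq_lt : qq < 1 := Real.rpow_lt_one_of_one_lt_of_neg (by norm_num) (by norm_num)
/-- Dyadic sum constant. -/
def SS : ℝ := qq⁻¹ * (1 - qq)⁻¹
lemma SS_pos : 0 < SS := by
  have := qq_pos; have := qq_lt
  have : 0 < 1 - qq := by linarith
  unfold SS; positivity

lemma tail_lint {d : ℕ} (ν : Measure (Euc d)) [IsFiniteMeasure ν] (D ε R : ℝ) (hD : 0 ≤ D)
    (hε : 0 < ε) (hε1 : ε ≤ 1/8) (hR : 1 ≤ R)
    (hF : ∀ T : ℝ, 1 ≤ T → FmuInt ν T ≤ D * T ^ ε) :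
    ∫⁻ ξ in {ξ : Euc d | ‖ξ‖ ≤ R}ᶜ, ENNReal.ofReal (‖charFun ν ξ‖ ^ 2 * (‖ξ‖ / R) ^ (-(1/4) : ℝ)) ≤
      ENNReal.ofReal (D * SS * R ^ ε) := by
  have hq := qq_pos
  have hq1 := qq_lt
  have hR0 : 0 < R := by linarith
  have hpow : ∀ k : ℕ, ((2:ℝ) ^ k) ^ (-(1/4) : ℝ) = qq ^ (2 * k) := by
    intro k
    rw [qq, ← Real.rpow_natCast, ← Real.rpow_natCast, ← Real.rpow_mul (by norm_num),
      ← Real.rpow_mul (by norm_num)]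
    congr 1; push_cast; ring
  have hpow2 : ∀ k : ℕ, ((2:ℝ) ^ (k+1)) ^ (1/8 : ℝ) = (qq ^ (k + 1))⁻¹ := by
    intro k
    rw [qq, ← Real.rpow_natCast, ← Real.rpow_natCast, ← Real.rpow_mul (by norm_num),
      ← Real.rpow_mul (by norm_num), ← Real.rpow_neg (by norm_num)]
    congr 1; push_cast; ring
  have hpt : ∀ ξ ∈ {ξ : Euc d | ‖ξ‖ ≤ R}ᶜ,
      ENNReal.ofReal (‖charFun ν ξ‖ ^ 2 * (‖ξ‖ / R) ^ (-(1/4) : ℝ)) ≤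
      ∑' k : ℕ, ENNReal.ofReal (qq ^ (2 * k)) * {ξ : Euc d | ‖ξ‖ ≤ 2 ^ (k+1) * R}.indicator
        (fun ξ => ENNReal.ofReal (‖charFun ν ξ‖ ^ 2)) ξ := by
    intro ξ hξ
    have hξ' : R < ‖ξ‖ := not_le.mp hξ
    obtain ⟨k, hk1, hk2⟩ := exists_nat_pow_near (x := ‖ξ‖ / R) (y := (2:ℝ))
      ((one_le_div hR0).mpr hξ'.le) (by norm_num)
    refine le_trans ?_ (ENNReal.le_tsum k)
    rw [indicator_of_mem (show ξ ∈ {ξ : Euc d | ‖ξ‖ ≤ 2 ^ (k+1) * R} from by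
      rw [div_lt_iff₀ hR0] at hk2; exact hk2.le), ← ENNReal.ofReal_mul (by positivity)]
    apply ENNReal.ofReal_le_ofReal
    rw [mul_comm, ← hpow]
    exact mul_le_mul_of_nonneg_right (Real.rpow_le_rpow_of_nonpos (z := (-(1/4) : ℝ))
      (by positivity) hk1 (by norm_num)) (by positivity)
  refine (setLIntegral_mono' (cball_meas R).compl hpt).trans ?_
  refine (setLIntegral_le_lintegral _ _).trans ?_
  have hmeas : ∀ k : ℕ, Measurable ({ξ : Euc d | ‖ξ‖ ≤ 2 ^ (k+1) * R}.indicator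
        (fun ξ => ENNReal.ofReal (‖charFun ν ξ‖ ^ 2))) := fun k =>
    ((aux_sq_meas ν).ennreal_ofReal).indicator (cball_meas _)
  rw [lintegral_tsum (fun k => ((hmeas k).const_mul _).aemeasurable)]
  have hterm : ∀ k : ℕ, ∫⁻ ξ, ENNReal.ofReal (qq ^ (2 * k)) * {ξ : Euc d | ‖ξ‖ ≤ 2 ^ (k+1) * R}.indicator
        (fun ξ => ENNReal.ofReal (‖charFun ν ξ‖ ^ 2)) ξ ≤ ENNReal.ofReal (D * R ^ ε * qq⁻¹ * qq ^ k) := by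
    intro k
    rw [lintegral_const_mul _ (hmeas k), lintegral_indicator (cball_meas _), FmuInt_lint,
      ← ENNReal.ofReal_mul (by positivity)]
    apply ENNReal.ofReal_le_ofReal
    have h2 : (1:ℝ) ≤ 2 ^ (k+1) := one_le_pow₀ (by norm_num)
    have h1 := hF (2 ^ (k+1) * R) (by nlinarith)
    rw [Real.mul_rpow (by positivity) hR0.le] at h1
    have h3 : ((2:ℝ) ^ (k+1)) ^ ε ≤ (qq ^ (k + 1))⁻¹ := by
      rw [← hpow2]
      exact Real.rpow_le_rpow_of_exponent_le h2 hε1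
    calc qq ^ (2 * k) * FmuInt ν (2 ^ (k+1) * R) ≤ qq ^ (2 * k) * (D * ((qq ^ (k + 1))⁻¹ * R ^ ε)) := by
          gcongr
          refine h1.trans ?_
          gcongr
      _ = D * R ^ ε * qq⁻¹ * qq ^ k := by
          field_simp
          ring
  refine (ENNReal.tsum_le_tsum hterm).trans ?_
  rw [← ENNReal.ofReal_tsum_of_nonneg (fun k => by positivity)
    ((summable_geometric_of_lt_one hq.le hq1).mul_left _), tsum_mul_left,
    tsum_geometric_of_lt_one hq.le hq1]
  apply le_of_eq
  congr 1
  unfold SS; ring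

lemma tail_real {d : ℕ} (ν : Measure (Euc d)) [IsFiniteMeasure ν] (D ε R B : ℝ) (hD : 0 ≤ D)
    (hε : 0 < ε) (hε1 : ε ≤ 1/8) (hR : 1 ≤ R) (hB : 0 ≤ B)
    (hF : ∀ T : ℝ, 1 ≤ T → FmuInt ν T ≤ D * T ^ ε) (w : Euc d → ℝ) (hw : Measurable w)
    (hw0 : ∀ ξ, 0 ≤ w ξ) (hwB : ∀ ξ : Euc d, R < ‖ξ‖ → w ξ ≤ B * (‖ξ‖ / R) ^ (-(1/4) : ℝ)) :
    IntegrableOn (fun ξ => ‖charFun ν ξ‖ ^ 2 * w ξ) {ξ : Euc d | ‖ξ‖ ≤ R}ᶜ ∧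
    ∫ ξ in {ξ : Euc d | ‖ξ‖ ≤ R}ᶜ, ‖charFun ν ξ‖ ^ 2 * w ξ ≤ B * (D * SS * R ^ ε) := by
  have hm := aux_sq_meas ν
  have hS := SS_pos
  have hR0 : 0 < R := by linarith
  have hl : ∫⁻ ξ in {ξ : Euc d | ‖ξ‖ ≤ R}ᶜ, ENNReal.ofReal (‖charFun ν ξ‖ ^ 2 * w ξ) ≤
      ENNReal.ofReal (B * (D * SS * R ^ ε)) := by
    rw [ENNReal.ofReal_mul hB]
    refine le_trans ?_ (mul_le_mul_right (tail_lint ν D ε R hD hε hε1 hR hF) _)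
    rw [← lintegral_const_mul']
    swap
    · exact ENNReal.ofReal_ne_top
    refine setLIntegral_mono' (cball_meas R).compl fun ξ hξ => ?_
    rw [← ENNReal.ofReal_mul hB]
    apply ENNReal.ofReal_le_ofReal
    have := hwB ξ (not_le.mp hξ)
    calc _ ≤ ‖charFun ν ξ‖ ^ 2 * (B * (‖ξ‖ / R) ^ (-(1/4) : ℝ)) := by gcongr
      _ = _ := by ring
  have h0 : 0 ≤ᵐ[volume.restrict {ξ : Euc d | ‖ξ‖ ≤ R}ᶜ] fun ξ => ‖charFun ν ξ‖ ^ 2 * w ξ :=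
    ae_of_all _ fun ξ => mul_nonneg (by positivity) (hw0 ξ)
  have hms : AEStronglyMeasurable (fun ξ => ‖charFun ν ξ‖ ^ 2 * w ξ)
      (volume.restrict {ξ : Euc d | ‖ξ‖ ≤ R}ᶜ) := (hm.mul hw).aestronglyMeasurable
  constructor
  · refine ⟨hms, ?_⟩
    rw [hasFiniteIntegral_iff_ofReal h0]
    exact hl.trans_lt ENNReal.ofReal_lt_top
  · rw [integral_eq_lintegral_of_nonneg_ae h0 hms]
    exact ENNReal.toReal_le_of_le_ofReal (by positivity) hl

lemma upper_restrict {d : ℕ} (μ : Measure (Euc d)) [IsFiniteMeasure μ] (K : Set (Euc d))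
    (C ε : ℝ) (hC : 0 ≤ C) (hε : 0 < ε) (hε1 : ε ≤ 1/8)
    (hF : ∀ T : ℝ, 1 ≤ T → FmuInt μ T ≤ C * T ^ ε) (T : ℝ) (hT : 1 ≤ T) :
    FmuInt (μ.restrict K) T ≤ Real.exp 1 * (1 + SS) * C * T ^ ε := by
  have hT0 : 0 < T := by linarith
  set l : ℝ := (T ^ 2)⁻¹ with hl
  have hl0 : 0 < l := by positivity
  have hgi : ∀ ν : Measure (Euc d), IsFiniteMeasure ν →
      Integrable (fun ξ => ‖charFun ν ξ‖ ^ 2 * Real.exp (-l * ‖ξ‖ ^ 2)) := by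
    intro ν _
    refine (aux_gauss_integrable l hl0).bdd_mul (c := (ν.real univ) ^ 2)
      (aux_sq_meas ν).aestronglyMeasurable (ae_of_all _ fun ξ => ?_)
    rw [Real.norm_eq_abs, abs_of_nonneg (by positivity)]
    exact aux_sq_bdd ν ξ
  have h1 : FmuInt (μ.restrict K) T ≤
      Real.exp 1 * ∫ ξ, ‖charFun (μ.restrict K) ξ‖ ^ 2 * Real.exp (-l * ‖ξ‖ ^ 2) := by
    rw [FmuInt_eq, ← integral_const_mul]
    refine le_trans ?_ (setIntegral_le_integral (s := {ξ : Euc d | ‖ξ‖ ≤ T})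
      ((hgi (μ.restrict K) inferInstance).const_mul _) (ae_of_all _ fun ξ => by positivity))
    refine setIntegral_mono_on (sq_intOn _ T) (((hgi (μ.restrict K) inferInstance).const_mul _).integrableOn)
      (cball_meas T) fun ξ hξ => ?_
    have hξ' : ‖ξ‖ ≤ T := hξ
    have : 1 ≤ Real.exp 1 * Real.exp (-l * ‖ξ‖ ^ 2) := by
      rw [← Real.exp_add]
      apply Real.one_le_exp
      have : l * ‖ξ‖ ^ 2 ≤ 1 := by
        rw [hl, inv_mul_le_iff₀ (by positivity), mul_one]
        gcongr
      linarith
    nlinarith [sq_nonneg ‖charFun (μ.restrict K) ξ‖]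
  have h2 := aux_mono μ K l hl0
  have h3 : ∫ ξ, ‖charFun μ ξ‖ ^ 2 * Real.exp (-l * ‖ξ‖ ^ 2) ≤ C * T ^ ε + 1 * (C * SS * T ^ ε) := by
    rw [← integral_add_compl (cball_meas T) (hgi μ inferInstance)]
    gcongr
    · refine le_trans ?_ (hF T hT)
      rw [FmuInt_eq]
      refine setIntegral_mono_on (hgi μ inferInstance).integrableOn (sq_intOn _ T) (cball_meas T)
        fun ξ hξ => ?_
      refine mul_le_of_le_one_right (by positivity) (Real.exp_le_one_iff.mpr ?_)
      rw [neg_mul]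
      exact neg_nonpos.mpr (by positivity)
    · refine (tail_real μ C ε T 1 hC hε hε1 hT zero_le_one hF _ (by fun_prop)
        (fun ξ => (Real.exp_pos _).le) fun ξ hξ => ?_).2
      set u := ‖ξ‖ / T with hu
      have hu1 : 1 ≤ u := (one_le_div hT0).mpr hξ.le
      have e : -l * ‖ξ‖ ^ 2 = -u ^ 2 := by rw [hu, hl]; field_simp
      rw [e, one_mul, Real.exp_neg, Real.rpow_neg (by linarith)]
      apply inv_anti₀ (by positivity)
      have a1 : u ^ (1/4 : ℝ) ≤ u := by
        conv_rhs => rw [← Real.rpow_one u]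
        exact Real.rpow_le_rpow_of_exponent_le hu1 (by norm_num)
      have a2 := Real.add_one_le_exp (u ^ 2)
      nlinarith
  calc _ ≤ _ := h1
    _ ≤ Real.exp 1 * (C * T ^ ε + 1 * (C * SS * T ^ ε)) := by
        gcongr; exact h2.trans h3
    _ = _ := by ring

lemma charFun_low {d : ℕ} (σ : Measure (Euc d)) [IsProbabilityMeasure σ] (hσ : σ {x | ‖x‖ ≠ 1} = 0)
    (η : Euc d) (hη : ‖η‖ ≤ 1/2) : 1/2 ≤ (charFun σ η).re := by
  have hω : ∀ᵐ ω ∂σ, ‖ω‖ = 1 := by rw [ae_iff]; exact hσ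
  have hi : Integrable (fun x => Complex.exp ((inner ℝ x η : ℝ) * Complex.I)) σ :=
    Integrable.of_bound (Continuous.aestronglyMeasurable (by fun_prop)) 1
      (ae_of_all _ fun q => (Complex.norm_exp_ofReal_mul_I _).le)
  have h : ‖charFun σ η - 1‖ ≤ 1/2 := by
    have e : charFun σ η - 1 = ∫ x, (Complex.exp ((inner ℝ x η : ℝ) * Complex.I) - 1) ∂σ := by
      rw [integral_sub hi (integrable_const _), charFun_apply]; simp
    rw [e]
    have : ∀ᵐ x ∂σ, ‖Complex.exp ((inner ℝ x η : ℝ) * Complex.I) - 1‖ ≤ 1/2 := by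
      filter_upwards [hω] with x hx
      rw [mul_comm]
      refine Real.norm_exp_I_mul_ofReal_sub_one_le.trans ?_
      have := norm_inner_le_norm (𝕜 := ℝ) x η
      rw [hx, one_mul] at this
      exact this.trans hη
    have := norm_integral_le_of_norm_le_const this
    simpa using this
  have h2 := (Complex.abs_re_le_norm _).trans h
  rw [abs_le] at h2
  simp at h2
  linarith [h2.1]


lemma step_ineq {d : ℕ} (σ : Measure (Euc d)) [IsProbabilityMeasure σ] (hσ : σ {x | ‖x‖ ≠ 1} = 0)
    (A : ℝ) (hA : 0 < A) (hdec : ∀ η : Euc d, 1 ≤ ‖η‖ → ‖charFun σ η‖ ≤ A * ‖η‖ ^ (-(1/4) : ℝ))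
    (ν : Measure (Euc d)) [IsFiniteMeasure ν] (K : Set (Euc d)) (hK : IsCompact K) (hνK : ν Kᶜ = 0)
    (D ε M t : ℝ) (hD : 0 ≤ D) (hε : 0 < ε) (hε1 : ε ≤ 1/8) (hM : 1 ≤ M) (ht : 0 < t) (ht1 : t ≤ 1/2)
    (hF : ∀ T : ℝ, 1 ≤ T → FmuInt ν T ≤ D * T ^ ε)
    (htK : ∀ x ∈ K, ∀ y ∈ K, dist x y ≠ t) :
    3/2 * FmuInt ν (1 / (2 * t)) ≤ FmuInt ν (M / t) + A * D * SS * M ^ (-(1/8) : ℝ) * (t⁻¹) ^ ε := by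
  have hM0 : 0 < M := by linarith
  have hS := SS_pos
  set R := M / t with hRdef
  set T := 1 / (2 * t) with hTdef
  have hR : 1 ≤ R := by rw [hRdef, one_le_div ht]; linarith
  have hR0 : 0 < R := by linarith
  have hTR : T ≤ R := by
    rw [hTdef, hRdef, div_le_div_iff₀ (by positivity) ht]; nlinarith
  have hcm : Measurable (fun ξ : Euc d => charFun σ (t • ξ)) := by
    have := measurable_charFun (μ := σ)
    fun_prop
  have hsq := aux_sq_meas ν
  obtain ⟨hti, htb⟩ := tail_real ν D ε R (A * M ^ (-(1/4) : ℝ)) hD hε hε1 hR (by positivity) hF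
    (fun ξ => ‖charFun σ (t • ξ)‖) hcm.norm (fun ξ => norm_nonneg _) (fun ξ hξ => by
      have hn : ‖t • ξ‖ = M * (‖ξ‖ / R) := by
        rw [norm_smul, Real.norm_eq_abs, abs_of_pos ht, hRdef]; field_simp
      have h1 : 1 ≤ ‖ξ‖ / R := (one_le_div hR0).mpr hξ.le
      have := hdec (t • ξ) (by rw [hn]; nlinarith)
      rwa [hn, Real.mul_rpow hM0.le (by positivity), ← mul_assoc] at this)
  have hmeasI : Measurable (fun ξ => ((‖charFun ν ξ‖ ^ 2 : ℝ) : ℂ) * charFun σ (t • ξ)) := by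
    fun_prop
  have hint : Integrable (fun ξ => ((‖charFun ν ξ‖ ^ 2 : ℝ) : ℂ) * charFun σ (t • ξ)) := by
    rw [← integrableOn_univ, ← union_compl_self {ξ : Euc d | ‖ξ‖ ≤ R}]
    refine IntegrableOn.union ?_ ?_
    · refine Integrable.mono' (sq_intOn ν R) hmeasI.aestronglyMeasurable (ae_of_all _ fun ξ => ?_)
      rw [norm_mul, Complex.norm_real, Real.norm_eq_abs, abs_of_nonneg (by positivity)]
      exact mul_le_of_le_one_right (by positivity) (norm_charFun_le_one _)
    · refine Integrable.mono' hti hmeasI.aestronglyMeasurable (ae_of_all _ fun ξ => ?_)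
      rw [norm_mul, Complex.norm_real, Real.norm_eq_abs, abs_of_nonneg (by positivity)]
  have hv := aux_vanish σ hσ ν K hK hνK t ht htK hint
  have hre : ∫ ξ, ‖charFun ν ξ‖ ^ 2 * (charFun σ (t • ξ)).re = 0 := by
    have h1 := integral_re hint
    have h2 : ∀ ξ, RCLike.re (((‖charFun ν ξ‖ ^ 2 : ℝ) : ℂ) * charFun σ (t • ξ)) =
        ‖charFun ν ξ‖ ^ 2 * (charFun σ (t • ξ)).re := fun ξ => Complex.re_ofReal_mul _ _
    simp_rw [h2] at h1
    rw [h1, hv]; simp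
  have hgi : Integrable (fun ξ => ‖charFun ν ξ‖ ^ 2 * (charFun σ (t • ξ)).re) := by
    refine hint.re.congr (ae_of_all _ fun ξ => Complex.re_ofReal_mul _ _)
  rw [← integral_add_compl (cball_meas R) hgi] at hre
  have hhigh : -(A * M ^ (-(1/4) : ℝ) * (D * SS * R ^ ε)) ≤
      ∫ ξ in {ξ : Euc d | ‖ξ‖ ≤ R}ᶜ, ‖charFun ν ξ‖ ^ 2 * (charFun σ (t • ξ)).re := by
    refine (neg_le_neg htb).trans ?_
    rw [← integral_neg]
    refine integral_mono hti.neg hgi.integrableOn fun ξ => ?_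
    have := (abs_le.mp (Complex.abs_re_le_norm (charFun σ (t • ξ)))).1
    have h0 : 0 ≤ ‖charFun ν ξ‖ ^ 2 := by positivity
    simp only
    nlinarith
  have hlow : 3/2 * FmuInt ν T - FmuInt ν R ≤
      ∫ ξ in {ξ : Euc d | ‖ξ‖ ≤ R}, ‖charFun ν ξ‖ ^ 2 * (charFun σ (t • ξ)).re := by
    have hsub : {ξ : Euc d | ‖ξ‖ ≤ T} ⊆ {ξ : Euc d | ‖ξ‖ ≤ R} := fun ξ (hξ : ‖ξ‖ ≤ T) => hξ.trans hTR
    have e1 : FmuInt ν T = ∫ ξ in {ξ : Euc d | ‖ξ‖ ≤ R},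
        {ξ : Euc d | ‖ξ‖ ≤ T}.indicator (fun ξ => ‖charFun ν ξ‖ ^ 2) ξ := by
      rw [setIntegral_indicator (cball_meas T), inter_eq_self_of_subset_right hsub, FmuInt_eq]
    have hii : IntegrableOn ({ξ : Euc d | ‖ξ‖ ≤ T}.indicator (fun ξ => ‖charFun ν ξ‖ ^ 2))
        {ξ : Euc d | ‖ξ‖ ≤ R} := (sq_intOn ν R).indicator (cball_meas T)
    rw [e1, FmuInt_eq ν R, ← integral_const_mul, ← integral_sub (hii.const_mul _) (sq_intOn ν R)]
    refine integral_mono ((hii.const_mul _).sub (sq_intOn ν R)) hgi.integrableOn fun ξ => ?_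
    have h0 : 0 ≤ ‖charFun ν ξ‖ ^ 2 := by positivity
    simp only
    by_cases hξ : ‖ξ‖ ≤ T
    · rw [indicator_of_mem (by exact hξ)]
      have := charFun_low σ hσ (t • ξ) (by
        rw [norm_smul, Real.norm_eq_abs, abs_of_pos ht]
        rw [hTdef, le_div_iff₀ (by positivity)] at hξ
        linarith)
      nlinarith
    · rw [indicator_of_notMem (by exact hξ)]
      have h1 := (abs_le.mp (Complex.abs_re_le_norm (charFun σ (t • ξ)))).1
      have h2 := norm_charFun_le_one (μ := σ) (t := t • ξ)
      nlinarith
  have hpow : M ^ (-(1/4) : ℝ) * R ^ ε ≤ M ^ (-(1/8) : ℝ) * (t⁻¹) ^ ε := by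
    rw [hRdef, div_eq_mul_inv M t, Real.mul_rpow hM0.le (by positivity), ← mul_assoc, ← Real.rpow_add hM0]
    gcongr
    linarith
  have : A * M ^ (-(1/4) : ℝ) * (D * SS * R ^ ε) ≤ A * D * SS * M ^ (-(1/8) : ℝ) * (t⁻¹) ^ ε := by
    calc _ = A * D * SS * (M ^ (-(1/4) : ℝ) * R ^ ε) := by ring
      _ ≤ A * D * SS * (M ^ (-(1/8) : ℝ) * (t⁻¹) ^ ε) := by gcongr
      _ = _ := by ring
  linarith

lemma lower_restrict {d : ℕ} (μ : Measure (Euc d)) [IsProbabilityMeasure μ] (K : Set (Euc d))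
    (hK : MeasurableSet K) (T : ℝ) :
    FmuInt μ T - 2 * μ.real Kᶜ * volume.real {ξ : Euc d | ‖ξ‖ ≤ T} ≤ FmuInt (μ.restrict K) T := by
  have hpt : ∀ ξ : Euc d, ‖charFun μ ξ‖ ^ 2 - 2 * μ.real Kᶜ ≤ ‖charFun (μ.restrict K) ξ‖ ^ 2 := by
    intro ξ
    have hi : Integrable (fun x => Complex.exp ((inner ℝ x ξ : ℝ) * Complex.I)) μ :=
      Integrable.of_bound (Continuous.aestronglyMeasurable (by fun_prop)) 1
        (ae_of_all _ fun q => (Complex.norm_exp_ofReal_mul_I _).le)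
    have e : charFun μ ξ = charFun (μ.restrict K) ξ + charFun (μ.restrict Kᶜ) ξ := by
      simp only [charFun_apply]
      exact (integral_add_compl hK hi).symm
    have h1 : ‖charFun (μ.restrict Kᶜ) ξ‖ ≤ μ.real Kᶜ := by
      have := norm_charFun_le (μ := μ.restrict Kᶜ) ξ
      simpa using this
    have h2 : ‖charFun μ ξ‖ ≤ ‖charFun (μ.restrict K) ξ‖ + μ.real Kᶜ := by
      rw [e]; exact (norm_add_le _ _).trans (by gcongr)
    have h3 : ‖charFun μ ξ‖ ≤ 1 := norm_charFun_le_one _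
    have h4 : ‖charFun (μ.restrict K) ξ‖ ≤ 1 := by
      have := norm_charFun_le (μ := μ.restrict K) ξ
      refine this.trans ?_
      simp
    have h5 : 0 ≤ μ.real Kᶜ := measureReal_nonneg
    nlinarith [norm_nonneg (charFun μ ξ), norm_nonneg (charFun (μ.restrict K) ξ)]
  have hc : IntegrableOn (fun _ : Euc d => 2 * μ.real Kᶜ) {ξ : Euc d | ‖ξ‖ ≤ T} :=
    integrableOn_const (cball_fin T).ne
  have e : FmuInt μ T - 2 * μ.real Kᶜ * volume.real {ξ : Euc d | ‖ξ‖ ≤ T} =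
      ∫ ξ in {ξ : Euc d | ‖ξ‖ ≤ T}, (‖charFun μ ξ‖ ^ 2 - 2 * μ.real Kᶜ) := by
    rw [integral_sub (sq_intOn μ T) hc, ← FmuInt_eq, setIntegral_const, smul_eq_mul]
    ring
  rw [e, FmuInt_eq]
  exact integral_mono ((sq_intOn μ T).sub hc) (sq_intOn _ T) hpt



set_option maxHeartbeats 2000000

lemma exists_M (P c : ℝ) (hc : 0 < c) : ∃ M : ℝ, 1 ≤ M ∧ P * M ^ (-(1/8) : ℝ) ≤ c := by
  have h := (tendsto_rpow_neg_atTop (y := (1/8 : ℝ)) (by norm_num)).const_mul P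
  rw [mul_zero] at h
  obtain ⟨M, h1, h2⟩ := ((h.eventually_le_const hc).and (eventually_ge_atTop 1)).exists
  exact ⟨M, h2, h1⟩

lemma exists_eps (B : ℝ) (hB : 1 ≤ B) : ∃ e : ℝ, 0 < e ∧ e ≤ 1/8 ∧ B ^ e ≤ 2 := by
  have hl : 0 ≤ Real.log B := Real.log_nonneg hB
  have hl2 : 0 < Real.log 2 := Real.log_pos (by norm_num)
  refine ⟨min (1/8) (Real.log 2 / (Real.log B + 1)), by positivity, min_le_left _ _, ?_⟩
  rw [Real.rpow_def_of_pos (by linarith)]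
  calc _ ≤ Real.exp (Real.log 2) := by
        apply Real.exp_le_exp.mpr
        calc _ ≤ Real.log B * (Real.log 2 / (Real.log B + 1)) := by
              gcongr; exact min_le_right _ _
          _ ≤ Real.log 2 := by
              rw [mul_div_assoc', div_le_iff₀ (by positivity)]; nlinarith
    _ = 2 := Real.exp_log (by norm_num)

/-- Theorem 1.13: given `d ≥ 2`, `C₀ ≥ 1` and `0 < τ₁ ≤ τ₂ < 1`, there exist
`ε₀ ∈ (0,1)` and `J₀ ∈ ℕ` such that for `s ∈ (d - ε₀, d)`, every quasi-regular Borel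
set `E ⊆ [0,1]^d` carrying a locally uniformly `s`-dimensional probability measure
with `C₀⁻¹ T^{d-s} ≤ F_μ(T) ≤ C₀ T^{d-s}` (T ≥ 1) has the property that `Δ(E)` meets
every `(τ₁,τ₂)`-lacunary sequence `t_1,…,t_{J₀} ⊆ (0,1]`. -/
theorem statement10 (d : ℕ) (hd : 2 ≤ d) (C₀ τ₁ τ₂ : ℝ)
    (hC₀ : 1 ≤ C₀) (hτ₁ : 0 < τ₁) (hττ : τ₁ ≤ τ₂) (hτ₂ : τ₂ < 1) :
    ∃ (ε₀ : ℝ) (J₀ : ℕ), ε₀ ∈ Ioo (0:ℝ) 1 ∧ 0 < J₀ ∧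
      ∀ s : ℝ, (d : ℝ) - ε₀ < s → s < d →
      ∀ E : Set (Euc d), MeasurableSet E → E ⊆ unitCube d → QuasiRegular E s →
      ∀ μ : Measure (Euc d), IsProbabilityMeasure μ → μ Eᶜ = 0 →
        LocallyUniformlyDim μ s →
        (∀ T : ℝ, 1 ≤ T →
          C₀⁻¹ * T ^ ((d : ℝ) - s) ≤ FmuInt μ T ∧ FmuInt μ T ≤ C₀ * T ^ ((d : ℝ) - s)) →
        ∀ t : ℕ → ℝ, (∀ j < J₀, t j ∈ Ioc (0:ℝ) 1) →
          (∀ j : ℕ, j + 1 < J₀ → τ₁ ≤ t (j+1) / t j ∧ t (j+1) / t j ≤ τ₂) →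
          ∃ j < J₀, t j ∈ distSet E E := by
  obtain ⟨σ, hσp, hσ, A, hA, hdec⟩ := exists_sphere_measure d hd
  have hS := SS_pos
  have hC0 : 0 < C₀ := by linarith
  have hτ₂0 : 0 < τ₂ := by linarith
  set D : ℝ := Real.exp 1 * (1 + SS) * C₀ with hDdef
  have hD : 0 < D := by positivity
  set c : ℝ := (1/16) * C₀⁻¹ with hcdef
  have hc : 0 < c := by positivity
  obtain ⟨M, hM, hMc⟩ := exists_M (A * D * SS) c hc
  have hM0 : 0 < M := by linarith
  obtain ⟨N, hN⟩ := exists_pow_lt_of_lt_one (show (0:ℝ) < 1 / (2 * M) by positivity) hτ₂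
  have hNh : τ₂ ^ N ≤ 1/2 := hN.le.trans (by
    rw [div_le_div_iff₀ (by positivity) (by norm_num)]; linarith)
  obtain ⟨n, hn⟩ := exists_nat_gt (2 * D / c)
  have hn' : 2 * D < n * c := by rwa [div_lt_iff₀ hc] at hn
  have hB1 : 1 ≤ (τ₁ ^ (n * N))⁻¹ :=
    (one_le_inv₀ (by positivity)).mpr (pow_le_one₀ hτ₁.le (by linarith))
  obtain ⟨ε₀, hε₀, hε₀8, hB⟩ := exists_eps _ hB1
  refine ⟨ε₀, (n + 1) * N + 1, ⟨hε₀, by linarith⟩, by omega, ?_⟩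
  intro s hs1 hs2 E hE _ _ μ hμ hμE _ hF t ht hlac
  by_contra hcon
  push Not at hcon
  set ε : ℝ := (d : ℝ) - s with hεdef
  have hε : 0 < ε := by linarith
  have hεε : ε ≤ ε₀ := by linarith
  have hε8 : ε ≤ 1/8 := by linarith
  have hup : ∀ m j : ℕ, j + m < (n + 1) * N + 1 → t (j + m) ≤ τ₂ ^ m * t j := by
    intro m
    induction m with
    | zero => intro j _; simp
    | succ m ih =>
      intro j hj
      have h1 := ih j (by omega)
      have h2 := (hlac (j + m) (by omega)).2
      have h3 := (ht (j + m) (by omega)).1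
      rw [div_le_iff₀ h3] at h2
      calc t (j + (m + 1)) ≤ τ₂ * t (j + m) := h2
        _ ≤ τ₂ * (τ₂ ^ m * t j) := by gcongr
        _ = _ := by ring
  have hlo : ∀ m j : ℕ, j + m < (n + 1) * N + 1 → τ₁ ^ m * t j ≤ t (j + m) := by
    intro m
    induction m with
    | zero => intro j _; simp
    | succ m ih =>
      intro j hj
      have h1 := ih j (by omega)
      have h2 := (hlac (j + m) (by omega)).1
      have h3 := (ht (j + m) (by omega)).1
      rw [le_div_iff₀ h3] at h2
      calc _ = τ₁ * (τ₁ ^ m * t j) := by ring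
        _ ≤ τ₁ * t (j + m) := by gcongr
        _ ≤ t (j + (m + 1)) := h2
  have hanti : ∀ m j : ℕ, j + m < (n + 1) * N + 1 → t (j + m) ≤ t j := by
    intro m j hj
    have h1 := hup m j hj
    have h2 : τ₂ ^ m ≤ 1 := pow_le_one₀ hτ₂0.le hτ₂.le
    have h3 := (ht j (by omega)).1
    nlinarith
  -- the compact subset
  set V : ℝ := volume.real {ξ : Euc d | ‖ξ‖ ≤ 1 / (2 * t ((n + 1) * N))} with hV
  have hV0 : 0 ≤ V := measureReal_nonneg
  set δ : ℝ := C₀⁻¹ / (4 * (V + 1)) with hδ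
  have hδ0 : 0 < δ := by positivity
  obtain ⟨K, hKE, hK, hμK⟩ := hE.exists_isCompact_sdiff_lt (μ := μ) (measure_ne_top μ E)
    (ε := ENNReal.ofReal δ) (by simpa using hδ0)
  have hKm : μ.real Kᶜ ≤ δ := by
    refine ENNReal.toReal_le_of_le_ofReal hδ0.le ?_
    calc μ Kᶜ ≤ μ (Eᶜ ∪ (E \ K)) := measure_mono (fun x hx => by
            by_cases h : x ∈ E
            · exact Or.inr ⟨h, hx⟩
            · exact Or.inl h)
      _ ≤ μ Eᶜ + μ (E \ K) := measure_union_le _ _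
      _ ≤ _ := by rw [hμE, zero_add]; exact hμK.le
  set ν := μ.restrict K with hν
  have hνK : ν Kᶜ = 0 := by rw [hν, Measure.restrict_apply hK.measurableSet.compl]; simp
  have hFν : ∀ T : ℝ, 1 ≤ T → FmuInt ν T ≤ D * T ^ ε :=
    upper_restrict μ K C₀ ε hC0.le hε hε8 (fun T hT => (hF T hT).2)
  have hhalf : ∀ j, N ≤ j → j < (n + 1) * N + 1 → t j ≤ 1/2 := by
    intro j hj1 hj2
    obtain ⟨m, rfl⟩ := Nat.exists_eq_add_of_le hj1
    have h1 := hanti m N hj2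
    have h2 := hup N 0 (by omega)
    rw [zero_add] at h2
    have h3 := (ht 0 (by omega))
    have : τ₂ ^ N * t 0 ≤ 1/2 * 1 := mul_le_mul hNh h3.2 h3.1.le (by norm_num)
    linarith
  have hT1 : ∀ j, N ≤ j → j < (n + 1) * N + 1 → 1 ≤ 1 / (2 * t j) := by
    intro j hj1 hj2
    have := hhalf j hj1 hj2
    have h0 := (ht j hj2).1
    rw [one_le_div (by positivity)]; linarith
  have hlow : ∀ j, N ≤ j → j < (n + 1) * N + 1 →
      1/4 * C₀⁻¹ * ((t j)⁻¹) ^ ε ≤ FmuInt ν (1 / (2 * t j)) := by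
    intro j hj1 hj2
    have h0 := (ht j hj2).1
    have hT := hT1 j hj1 hj2
    have h1 := lower_restrict μ K hK.measurableSet (1 / (2 * t j))
    have h2 := (hF _ hT).1
    have hl0 := (ht ((n + 1) * N) (by omega)).1
    have hle : t ((n + 1) * N) ≤ t j := by
      have := hanti ((n + 1) * N - j) j (by omega)
      rwa [show j + ((n + 1) * N - j) = (n + 1) * N by omega] at this
    have h3 : volume.real {ξ : Euc d | ‖ξ‖ ≤ 1 / (2 * t j)} ≤ V := by
      refine measureReal_mono (fun ξ (hξ : ‖ξ‖ ≤ _) => hξ.trans ?_) (cball_fin _).ne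
      gcongr
    have h4 : 2 * μ.real Kᶜ * volume.real {ξ : Euc d | ‖ξ‖ ≤ 1 / (2 * t j)} ≤ 1/2 * C₀⁻¹ := by
      calc _ ≤ 2 * δ * V := by gcongr
        _ ≤ 2 * δ * (V + 1) := by gcongr; linarith
        _ = 1/2 * C₀⁻¹ := by rw [hδ]; field_simp; norm_num
    have h5 : 1 ≤ (1 / (2 * t j)) ^ ε := Real.one_le_rpow hT hε.le
    have h6 : 1/2 * ((t j)⁻¹) ^ ε ≤ (1 / (2 * t j)) ^ ε := by
      rw [show 1 / (2 * t j) = 1/2 * (t j)⁻¹ by field_simp, Real.mul_rpow (by norm_num) (by positivity)]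
      gcongr
      calc (1/2 : ℝ) = (1/2 : ℝ) ^ (1:ℝ) := by simp
        _ ≤ (1/2 : ℝ) ^ ε := Real.rpow_le_rpow_of_exponent_ge (by norm_num) (by norm_num) (by linarith)
    have hCi : 0 < C₀⁻¹ := by positivity
    nlinarith
  have hstep : ∀ j, N ≤ j → j + N < (n + 1) * N + 1 →
      FmuInt ν (1 / (2 * t j)) + c * ((t N)⁻¹) ^ ε ≤ FmuInt ν (1 / (2 * t (j + N))) := by
    intro j hj1 hj2
    have hj3 : j < (n + 1) * N + 1 := by omega
    have h0 := (ht j hj3).1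
    have h0' := (ht (j + N) hj2).1
    have hs := step_ineq σ hσ A hA hdec ν K hK hνK D ε M (t j) hD.le hε hε8 hM h0
      (hhalf j hj1 hj3) hFν (fun x hx y hy h => hcon j hj3 ⟨x, hKE hx, y, hKE hy, h⟩)
    have hlw := hlow j hj1 hj3
    have hmono : FmuInt ν (M / t j) ≤ FmuInt ν (1 / (2 * t (j + N))) := by
      apply FmuInt_mono
      rw [div_le_div_iff₀ h0 (by positivity)]
      have h1 := hup N j hj2
      rw [lt_div_iff₀ (by positivity)] at hN
      nlinarith [mul_le_mul_of_nonneg_left h1 hM0.le, mul_lt_mul_of_pos_right hN h0]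
    have hp : 0 < ((t j)⁻¹) ^ ε := by positivity
    have hle : ((t N)⁻¹) ^ ε ≤ ((t j)⁻¹) ^ ε := by
      have hN0 := (ht N (by omega)).1
      have := hanti (j - N) N (by omega)
      rw [show N + (j - N) = j by omega] at this
      gcongr
    have e1 : A * D * SS * M ^ (-(1/8) : ℝ) * ((t j)⁻¹) ^ ε ≤ c * ((t j)⁻¹) ^ ε := by gcongr
    have e2 : c * ((t N)⁻¹) ^ ε ≤ c * ((t j)⁻¹) ^ ε := by gcongr
    have e3 : 1/4 * C₀⁻¹ * ((t j)⁻¹) ^ ε = 4 * (c * ((t j)⁻¹) ^ ε) := by rw [hcdef]; ring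
    linarith
  have hiter : ∀ i : ℕ, i ≤ n → i * (c * ((t N)⁻¹) ^ ε) ≤ FmuInt ν (1 / (2 * t (N + i * N))) := by
    intro i
    induction i with
    | zero => intro _; simpa using FmuInt_nonneg _ _
    | succ i ih =>
      intro hi
      have h1 := ih (by omega)
      have h3 : (i + 1) * N ≤ n * N := Nat.mul_le_mul_right _ hi
      have h2 := hstep (N + i * N) (by omega) (by nlinarith)
      rw [show N + (i + 1) * N = N + i * N + N by ring]
      push_cast
      linarith
  have hfin := hiter n le_rfl
  have hidx : N + n * N < (n + 1) * N + 1 := by nlinarith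
  have hup2 := hFν _ (hT1 (N + n * N) (by omega) hidx)
  have hN0 := (ht N (by nlinarith)).1
  have hL0 := (ht _ hidx).1
  have hb : (1 / (2 * t (N + n * N))) ^ ε ≤ 2 * ((t N)⁻¹) ^ ε := by
    have h1 := hlo (n * N) N hidx
    calc (1 / (2 * t (N + n * N))) ^ ε ≤ ((τ₁ ^ (n * N))⁻¹ * (t N)⁻¹) ^ ε := by
          refine Real.rpow_le_rpow (by positivity) ?_ hε.le
          rw [← mul_inv, one_div]
          apply inv_anti₀ (by positivity)
          linarith
      _ = ((τ₁ ^ (n * N))⁻¹) ^ ε * ((t N)⁻¹) ^ ε := Real.mul_rpow (by positivity) (by positivity)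
      _ ≤ 2 * ((t N)⁻¹) ^ ε := by
          refine mul_le_mul_of_nonneg_right ?_ (by positivity)
          exact (Real.rpow_le_rpow_of_exponent_le hB1 hεε).trans hB
  have hp : 0 < ((t N)⁻¹) ^ ε := by positivity
  nlinarith [mul_le_mul_of_nonneg_left hb hD.le, mul_lt_mul_of_pos_right hn' hp]
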